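/- arXiv:1902.08936 — 2 statements merged into one kernel-verified Lean document; each statement's English description precedes it below -/
import Mathlib

section
/- Let w be a measurable nonnegative function on [0,1]² with finite integral that is strictly positive almost everywhere on [0,1]². Let θ=(θ₁,θ₂,θ₃) with θ₁>θ₃, θ₂>θ₃, θ₃>0, and let g be the pgf of an ℕ₀²-valued random vector (X₁,X₂) such that ∂g(u₁,1)/∂u₁, ∂g(1,u₂)/∂u₂ and ∂²g(u₁,u₂)/∂u₁∂u₂ exist and are continuous on a region containing [0,1]². Then η(g;θ)=∫₀¹∫₀¹{D₁(u;θ)²+D₂(u;θ)²+D₃(u;θ)²}w(u)du = 0 if and only if (X₁,X₂) has the bivariate Poisson distribution BP(θ), i.e., g(u)=exp{θ₁(u₁−1)+θ₂(u₂−1)+θ₃(u₁−1)(u₂−1)} on [0,1]². -/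
/-!
Both directions rest on the fact that `B = bpPgf θ` satisfies `D₁ = D₂ = D₃ = 0`.

If `η = 0`, the integrand is a nonnegative continuous function times an a.e. positive weight, so
`D₁ = D₂ = D₃ = 0` everywhere on the closed square. The equations `D₁ = 0` and `D₂ = 0` are linear
ODEs that force `g = B` on the edges `u₂ = 1` and `u₁ = 1` (`eq_exp_of_deriv`). The equation
`D₃ = 0` then says that `H = g - B` solves the Goursat problem `∂₂∂₁H = f H` with zero data on
these two edges. It has only the zero solution (`goursat_unique`): in the weighted sup norm
`K = max |H(u)| exp (λ (u₁ + u₂))`, integrating twice gives `K ≤ (M / λ²) K` with `M` a bound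
for `|f|`, and this forces `K = 0` once `λ² > M`.

Conversely, `g = B` on the square determines the derivatives there, also at the boundary, because
the two-sided derivatives of `g` are assumed to exist and so agree with those within `[0,1]`.
-/


open MeasureTheory ProbabilityTheory Real Set Filter

noncomputable section

/-- The probability generating function of an `ℕ₀²`-valued random vector. -/
def pgf2 {Ω : Type*} [MeasurableSpace Ω] (P : Measure Ω)
    (X : Ω → ℕ × ℕ) (u₁ u₂ : ℝ) : ℝ :=
  ∫ ω, u₁ ^ (X ω).1 * u₂ ^ (X ω).2 ∂P

/-- The probability generating function of the bivariate Poisson distribution `BP(θ)`. -/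
def bpPgf (θ : ℝ × ℝ × ℝ) (u₁ u₂ : ℝ) : ℝ :=
  Real.exp (θ.1 * (u₁ - 1) + θ.2.1 * (u₂ - 1) + θ.2.2 * (u₁ - 1) * (u₂ - 1))

/-- The function `f(u;θ) = θ₃ + {θ₂+θ₃(u₁-1)}{θ₁+θ₃(u₂-1)}`. -/
def fBP (θ : ℝ × ℝ × ℝ) (u : ℝ × ℝ) : ℝ :=
  θ.2.2 + (θ.2.1 + θ.2.2 * (u.1 - 1)) * (θ.1 + θ.2.2 * (u.2 - 1))

/-- The population functions `D₁(u;θ), D₂(u;θ), D₃(u;θ)` associated with a pgf `g`. -/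
def D1 (g : ℝ → ℝ → ℝ) (θ : ℝ × ℝ × ℝ) (u : ℝ × ℝ) : ℝ :=
  deriv (fun v => g v 1) u.1 - θ.1 * g u.1 1

def D2 (g : ℝ → ℝ → ℝ) (θ : ℝ × ℝ × ℝ) (u : ℝ × ℝ) : ℝ :=
  deriv (fun v => g 1 v) u.2 - θ.2.1 * g 1 u.2

def D3 (g : ℝ → ℝ → ℝ) (θ : ℝ × ℝ × ℝ) (u : ℝ × ℝ) : ℝ :=
  deriv (fun v₂ => deriv (fun v₁ => g v₁ v₂) u.1) u.2 - fBP θ u * g u.1 u.2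

/-- The unit square `[0,1]²`. -/
def unitSq : Set (ℝ × ℝ) := Icc (0:ℝ) 1 ×ˢ Icc (0:ℝ) 1

/-- `η(g;θ) = ∫∫ {D₁² + D₂² + D₃²} w du`. -/
def eta (g : ℝ → ℝ → ℝ) (θ : ℝ × ℝ × ℝ) (w : ℝ × ℝ → ℝ) : ℝ :=
  ∫ u in unitSq, (D1 g θ u ^ 2 + D2 g θ u ^ 2 + D3 g θ u ^ 2) * w u

/-- The empirical probability generating function of the first `n` observations. -/
def epgf {Ω : Type*} (X : ℕ → Ω → ℕ × ℕ) (n : ℕ) (ω : Ω) (u₁ u₂ : ℝ) : ℝ :=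
  (n : ℝ)⁻¹ * ∑ i ∈ Finset.range n, u₁ ^ (X i ω).1 * u₂ ^ (X i ω).2

/-- The test statistic
`Tₙ,w = n ∫∫ {D₁ₙ(u;θ̂ₙ)² + D₂ₙ(u;θ̂ₙ)² + D₃ₙ(u;θ̂ₙ)²} w(u) du`. -/
def Tnw {Ω : Type*} (X : ℕ → Ω → ℕ × ℕ) (w : ℝ × ℝ → ℝ)
    (θhat : ℕ → Ω → ℝ × ℝ × ℝ) (n : ℕ) (ω : Ω) : ℝ :=
  n * ∫ u in unitSq,
    (D1 (epgf X n ω) (θhat n ω) u ^ 2 + D2 (epgf X n ω) (θhat n ω) u ^ 2 +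
      D3 (epgf X n ω) (θhat n ω) u ^ 2) * w u

end

lemma bpPgf_hasDerivAt_fst (θ : ℝ × ℝ × ℝ) (u v : ℝ) :
    HasDerivAt (fun t => bpPgf θ t v) ((θ.1 + θ.2.2 * (v - 1)) * bpPgf θ u v) u := by
  have h : HasDerivAt (fun t : ℝ => θ.1 * (t - 1) + θ.2.1 * (v - 1) + θ.2.2 * (t - 1) * (v - 1))
      (θ.1 * 1 + θ.2.2 * 1 * (v - 1)) u := by
    have h0 := (hasDerivAt_id u).sub_const (1 : ℝ)
    exact ((h0.const_mul θ.1).add_const (θ.2.1 * (v - 1))).add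
      ((h0.const_mul θ.2.2).mul_const (v - 1))
  refine h.exp.congr_deriv ?_
  simp only [bpPgf]
  ring

lemma bpPgf_hasDerivAt_snd (θ : ℝ × ℝ × ℝ) (u v : ℝ) :
    HasDerivAt (fun t => bpPgf θ u t) ((θ.2.1 + θ.2.2 * (u - 1)) * bpPgf θ u v) v := by
  have h : HasDerivAt (fun t : ℝ => θ.1 * (u - 1) + θ.2.1 * (t - 1) + θ.2.2 * (u - 1) * (t - 1))
      (θ.2.1 * 1 + θ.2.2 * (u - 1) * 1) v := by
    have h0 := (hasDerivAt_id v).sub_const (1 : ℝ)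
    exact ((h0.const_mul θ.2.1).const_add (θ.1 * (u - 1))).add
      (h0.const_mul (θ.2.2 * (u - 1)))
  refine h.exp.congr_deriv ?_
  simp only [bpPgf]
  ring

lemma bpPgf_hasDerivAt_mixed (θ : ℝ × ℝ × ℝ) (u v : ℝ) :
    HasDerivAt (fun t => (θ.1 + θ.2.2 * (t - 1)) * bpPgf θ u t)
      (fBP θ (u, v) * bpPgf θ u v) v := by
  have h : HasDerivAt (fun t : ℝ => θ.1 + θ.2.2 * (t - 1)) (θ.2.2 * 1) v :=
    (((hasDerivAt_id v).sub_const (1 : ℝ)).const_mul θ.2.2).const_add θ.1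
  refine (h.mul (bpPgf_hasDerivAt_snd θ u v)).congr_deriv ?_
  simp only [fBP]
  ring

lemma deriv_bpPgf_fst (θ : ℝ × ℝ × ℝ) (u v : ℝ) :
    deriv (fun t => bpPgf θ t v) u = (θ.1 + θ.2.2 * (v - 1)) * bpPgf θ u v :=
  (bpPgf_hasDerivAt_fst θ u v).deriv

lemma bpPgf_continuous (θ : ℝ × ℝ × ℝ) : Continuous (fun u : ℝ × ℝ => bpPgf θ u.1 u.2) := by
  unfold bpPgf
  fun_prop

lemma fBP_continuous (θ : ℝ × ℝ × ℝ) : Continuous (fBP θ) := by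
  unfold fBP
  fun_prop

lemma isCompact_unitSq : IsCompact unitSq := isCompact_Icc.prod isCompact_Icc

lemma unitSq_subset_closure_interior : unitSq ⊆ closure (interior unitSq) := by
  rw [unitSq, interior_prod_eq, closure_prod_eq, interior_Icc,
    closure_Ioo (zero_ne_one (α := ℝ))]

/-- Two-sided derivatives at points of `[0,1]`, endpoints included, only depend on the values
on `[0,1]`. -/
lemma deriv_eq_of_eqOn {φ ψ : ℝ → ℝ} {t : ℝ} (ht : t ∈ Icc (0 : ℝ) 1)
    (hφ : DifferentiableAt ℝ φ t) (hψ : DifferentiableAt ℝ ψ t)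
    (h : EqOn φ ψ (Icc 0 1)) : deriv φ t = deriv ψ t := by
  have hu : UniqueDiffWithinAt ℝ (Icc (0 : ℝ) 1) t := uniqueDiffOn_Icc zero_lt_one t ht
  rw [← hφ.derivWithin hu, ← hψ.derivWithin hu]
  exact derivWithin_congr h (h ht)

/-- One-sided half of `abs_le_of_abs_deriv_le`. -/
lemma neg_le_of_abs_deriv_le {φ : ℝ → ℝ} {A l : ℝ} (hl : 0 < l) (hA : 0 ≤ A)
    (hφ : ∀ t ∈ Icc (0 : ℝ) 1, DifferentiableAt ℝ φ t) (h1 : φ 1 = 0)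
    (hb : ∀ t ∈ Icc (0 : ℝ) 1, |deriv φ t| ≤ A * exp (-l * t)) {t : ℝ}
    (ht : t ∈ Icc (0 : ℝ) 1) : -φ t ≤ A / l * exp (-l * t) := by
  have hd : ∀ s ∈ Icc (0 : ℝ) 1, HasDerivAt (fun s => φ s + A / l * exp (-l * s))
      (deriv φ s + A / l * (exp (-l * s) * (-l * 1))) s := fun s hs =>
    (hφ s hs).hasDerivAt.add ((((hasDerivAt_id s).const_mul (-l)).exp).const_mul (A / l))
  have hanti : AntitoneOn (fun s => φ s + A / l * exp (-l * s)) (Icc 0 1) := by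
    refine antitoneOn_of_deriv_nonpos (convex_Icc 0 1)
      (fun s hs => (hd s hs).continuousAt.continuousWithinAt) ?_ ?_
    · intro s hs
      exact (hd s (interior_subset hs)).differentiableAt.differentiableWithinAt
    · intro s hs
      rw [(hd s (interior_subset hs)).deriv]
      have h2 := (abs_le.1 (hb s (interior_subset hs))).2
      have h3 : A / l * (exp (-l * s) * (-l * 1)) = -(A * exp (-l * s)) := by
        field_simp
      linarith
  have h4 := hanti ht (right_mem_Icc.2 zero_le_one) ht.2
  have h5 : 0 ≤ A / l * exp (-l * 1) := by positivity
  simp only [h1] at h4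
  linarith

/-- Integrating an exponentially weighted bound from `1` down to `t` gains a factor `1 / l`. -/
lemma abs_le_of_abs_deriv_le {φ : ℝ → ℝ} {A l : ℝ} (hl : 0 < l) (hA : 0 ≤ A)
    (hφ : ∀ t ∈ Icc (0 : ℝ) 1, DifferentiableAt ℝ φ t) (h1 : φ 1 = 0)
    (hb : ∀ t ∈ Icc (0 : ℝ) 1, |deriv φ t| ≤ A * exp (-l * t)) {t : ℝ}
    (ht : t ∈ Icc (0 : ℝ) 1) : |φ t| ≤ A / l * exp (-l * t) := by
  have e1 := neg_le_of_abs_deriv_le hl hA hφ h1 hb ht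
  have e2 := neg_le_of_abs_deriv_le (φ := fun s => -φ s) hl hA (fun s hs => (hφ s hs).neg)
    (by simp [h1]) (fun s hs => by simpa [deriv.fun_neg] using hb s hs) ht
  exact abs_le.2 ⟨by linarith, by linarith⟩

/-- Uniqueness for the Goursat problem `∂₂∂₁H = f H` on the unit square: zero data on the edges
`u₁ = 1` and `u₂ = 1` force `H = 0`. Here `H₁` stands for `∂₁H`. -/
lemma goursat_unique {H H₁ : ℝ → ℝ → ℝ} {f : ℝ × ℝ → ℝ}
    (hH : ContinuousOn (fun u : ℝ × ℝ => H u.1 u.2) unitSq)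
    (hf : ContinuousOn f unitSq)
    (hd1 : ∀ u ∈ unitSq, HasDerivAt (fun t => H t u.2) (H₁ u.1 u.2) u.1)
    (hd2 : ∀ u ∈ unitSq, HasDerivAt (fun t => H₁ u.1 t) (f u * H u.1 u.2) u.2)
    (hb1 : ∀ v ∈ Icc (0 : ℝ) 1, H 1 v = 0)
    (hb2 : ∀ u ∈ Icc (0 : ℝ) 1, H₁ u 1 = 0) :
    ∀ u ∈ unitSq, H u.1 u.2 = 0 := by
  obtain ⟨M, hM⟩ := isCompact_unitSq.exists_bound_of_continuousOn hf
  have hne : unitSq.Nonempty := ⟨(0, 0), by simp [unitSq]⟩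
  have hM0 : 0 ≤ M := (norm_nonneg _).trans (hM _ hne.some_mem)
  set l := M + 1 with hl
  have hl0 : 0 < l := by linarith
  have hc : ContinuousOn (fun u : ℝ × ℝ => |H u.1 u.2| * exp (l * (u.1 + u.2))) unitSq :=
    hH.abs.mul (by fun_prop)
  obtain ⟨p, hp, hmax⟩ := isCompact_unitSq.exists_isMaxOn hne hc
  set K := |H p.1 p.2| * exp (l * (p.1 + p.2)) with hK
  have hK0 : 0 ≤ K := by positivity
  have hKb : ∀ u ∈ unitSq, |H u.1 u.2| ≤ K * exp (-l * u.1) * exp (-l * u.2) := by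
    intro u hu
    have h : |H u.1 u.2| * exp (l * (u.1 + u.2)) ≤ K := hmax hu
    have e : exp (l * (u.1 + u.2)) * (exp (-l * u.1) * exp (-l * u.2)) = 1 := by
      rw [← exp_add, ← exp_add, ← exp_zero]
      congr 1
      ring
    calc |H u.1 u.2|
        = |H u.1 u.2| * exp (l * (u.1 + u.2)) * (exp (-l * u.1) * exp (-l * u.2)) := by
          rw [mul_assoc, e, mul_one]
      _ ≤ K * (exp (-l * u.1) * exp (-l * u.2)) := by gcongr
      _ = _ := by ring
  have hH1 : ∀ u ∈ unitSq, |H₁ u.1 u.2| ≤ M * K * exp (-l * u.1) / l * exp (-l * u.2) := by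
    intro u hu
    refine abs_le_of_abs_deriv_le (φ := fun t => H₁ u.1 t) hl0 (by positivity)
      (fun t ht => (hd2 (u.1, t) ⟨hu.1, ht⟩).differentiableAt) (hb2 _ hu.1) ?_ hu.2
    intro t ht
    rw [(hd2 (u.1, t) ⟨hu.1, ht⟩).deriv, abs_mul]
    have a1 : |f (u.1, t)| ≤ M := hM _ ⟨hu.1, ht⟩
    have a2 := hKb (u.1, t) ⟨hu.1, ht⟩
    calc |f (u.1, t)| * |H u.1 t| ≤ M * (K * exp (-l * u.1) * exp (-l * t)) := by gcongr
      _ = _ := by ring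
  have hH0 : ∀ u ∈ unitSq, |H u.1 u.2| ≤ M * K * exp (-l * u.2) / l / l * exp (-l * u.1) := by
    intro u hu
    refine abs_le_of_abs_deriv_le (φ := fun t => H t u.2) hl0 (by positivity)
      (fun t ht => (hd1 (t, u.2) ⟨ht, hu.2⟩).differentiableAt) (hb1 _ hu.2) ?_ hu.1
    intro t ht
    rw [(hd1 (t, u.2) ⟨ht, hu.2⟩).deriv]
    refine (hH1 (t, u.2) ⟨ht, hu.2⟩).trans (le_of_eq ?_)
    ring
  have hKle : K ≤ M * K / l / l := by
    have e : exp (l * (p.1 + p.2)) * (exp (-l * p.1) * exp (-l * p.2)) = 1 := by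
      rw [← exp_add, ← exp_add, ← exp_zero]
      congr 1
      ring
    calc K ≤ M * K * exp (-l * p.2) / l / l * exp (-l * p.1) * exp (l * (p.1 + p.2)) := by
          rw [hK]
          gcongr
          exact hH0 p hp
      _ = M * K / l / l * (exp (l * (p.1 + p.2)) * (exp (-l * p.1) * exp (-l * p.2))) := by ring
      _ = M * K / l / l := by rw [e, mul_one]
  have hKz : K = 0 := by
    rw [div_div, le_div_iff₀ (by positivity)] at hKle
    have : K * (M * M + M + 1) ≤ 0 := by
      rw [hl] at hKle
      linarith
    nlinarith [mul_nonneg hK0 hM0, mul_nonneg hK0 (mul_nonneg hM0 hM0)]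
  intro u hu
  have h := hKb u hu
  rw [hKz] at h
  simpa using h

lemma eq_exp_of_deriv {φ : ℝ → ℝ} {c : ℝ}
    (hφ : ∀ t ∈ Icc (0 : ℝ) 1, DifferentiableAt ℝ φ t) (h1 : φ 1 = 1)
    (hb : ∀ t ∈ Icc (0 : ℝ) 1, deriv φ t = c * φ t) {t : ℝ}
    (ht : t ∈ Icc (0 : ℝ) 1) : φ t = exp (c * (t - 1)) := by
  -- The quotient of the two sides has zero derivative.
  have hd : ∀ s ∈ Icc (0 : ℝ) 1, HasDerivAt (fun s => φ s * exp (-c * (s - 1))) 0 s := by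
    intro s hs
    have h := (hφ s hs).hasDerivAt.mul
      ((((hasDerivAt_id s).sub_const (1 : ℝ)).const_mul (-c)).exp)
    refine h.congr_deriv ?_
    rw [hb s hs]
    simp only [id]
    ring
  have hc := constant_of_has_deriv_right_zero
    (fun s hs => (hd s hs).continuousAt.continuousWithinAt)
    (fun s hs => (hd s (Ico_subset_Icc_self hs)).hasDerivWithinAt)
  have e := (hc t ht).trans (hc 1 (right_mem_Icc.2 zero_le_one)).symm
  simp only [h1, sub_self, mul_zero, exp_zero, mul_one] at e
  rw [neg_mul, exp_neg] at e
  field_simp at e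
  exact e

lemma pgf2_continuousOn {Ω : Type*} [MeasurableSpace Ω] (P : Measure Ω) [IsProbabilityMeasure P]
    (X : Ω → ℕ × ℕ) (hX : Measurable X) :
    ContinuousOn (fun u : ℝ × ℝ => pgf2 P X u.1 u.2) unitSq := by
  unfold pgf2
  refine continuousOn_of_dominated (bound := fun _ => 1) ?_ ?_ (integrable_const _) ?_
  · intro u _
    exact ((measurable_of_countable (fun n : ℕ × ℕ => u.1 ^ n.1 * u.2 ^ n.2)).comp
      hX).aestronglyMeasurable
  · intro u hu
    refine Eventually.of_forall fun ω => ?_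
    rw [norm_mul, norm_pow, norm_pow, Real.norm_of_nonneg hu.1.1, Real.norm_of_nonneg hu.2.1]
    exact mul_le_one₀ (pow_le_one₀ hu.1.1 hu.1.2) (pow_nonneg hu.2.1 _)
      (pow_le_one₀ hu.2.1 hu.2.2)
  · exact Eventually.of_forall fun ω => by fun_prop

/-- if the weight `w` is positive a.e. on `[0,1]²`, then `η(g;θ) = 0` if and
only if `(X₁,X₂) ∼ BP(θ)`, i.e. the pgf `g` equals the BP(θ) pgf on `[0,1]²`. -/
theorem eta_eq_zero_iff_bp
    {Ω : Type*} [MeasurableSpace Ω] (P : Measure Ω) [IsProbabilityMeasure P]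
    (θ : ℝ × ℝ × ℝ) (h₁ : θ.2.2 < θ.1) (h₂ : θ.2.2 < θ.2.1) (h₃ : 0 < θ.2.2)
    (X : Ω → ℕ × ℕ) (hX : Measurable X)
    (g : ℝ → ℝ → ℝ) (hg : g = pgf2 P X)
    (hd1 : ∀ u₁ ∈ Icc (0:ℝ) 1, DifferentiableAt ℝ (fun v => g v 1) u₁)
    (hc1 : ContinuousOn (fun v => deriv (fun t => g t 1) v) (Icc (0:ℝ) 1))
    (hd2 : ∀ u₂ ∈ Icc (0:ℝ) 1, DifferentiableAt ℝ (fun v => g 1 v) u₂)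
    (hc2 : ContinuousOn (fun v => deriv (fun t => g 1 t) v) (Icc (0:ℝ) 1))
    (hd3a : ∀ u ∈ unitSq, DifferentiableAt ℝ (fun v₁ => g v₁ u.2) u.1)
    (hd3b : ∀ u ∈ unitSq, DifferentiableAt ℝ (fun v₂ => deriv (fun v₁ => g v₁ v₂) u.1) u.2)
    (hc3 : ContinuousOn
      (fun u : ℝ × ℝ => deriv (fun v₂ => deriv (fun v₁ => g v₁ v₂) u.1) u.2) unitSq)
    (w : ℝ × ℝ → ℝ) (hwmeas : Measurable w) (hwnonneg : ∀ u ∈ unitSq, 0 ≤ w u)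
    (hwint : IntegrableOn w unitSq)
    (hwpos : ∀ᵐ u ∂(volume.restrict unitSq), 0 < w u) :
    eta g θ w = 0 ↔ ∀ u ∈ unitSq, g u.1 u.2 = bpPgf θ u.1 u.2 := by
  have hgc : ContinuousOn (fun u : ℝ × ℝ => g u.1 u.2) unitSq := by
    rw [hg]
    exact pgf2_continuousOn P X hX
  have hg11 : g 1 1 = 1 := by
    rw [hg]
    simp [pgf2]
  have hone : (1 : ℝ) ∈ Icc (0 : ℝ) 1 := right_mem_Icc.2 zero_le_one
  have hfst : MapsTo (Prod.fst : ℝ × ℝ → ℝ) unitSq (Icc 0 1) := fun u hu => hu.1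
  have hsnd : MapsTo (Prod.snd : ℝ × ℝ → ℝ) unitSq (Icc 0 1) := fun u hu => hu.2
  constructor
  · intro h0
    have hD1 : ContinuousOn (D1 g θ) unitSq := by
      have a : ContinuousOn (fun v => g v 1) (Icc 0 1) := fun v hv =>
        (hd1 v hv).continuousAt.continuousWithinAt
      exact (hc1.comp continuousOn_fst hfst).sub
        (continuousOn_const.mul (a.comp continuousOn_fst hfst))
    have hD2 : ContinuousOn (D2 g θ) unitSq := by
      have a : ContinuousOn (fun v => g 1 v) (Icc 0 1) := fun v hv =>
        (hd2 v hv).continuousAt.continuousWithinAt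
      exact (hc2.comp continuousOn_snd hsnd).sub
        (continuousOn_const.mul (a.comp continuousOn_snd hsnd))
    have hD3 : ContinuousOn (D3 g θ) unitSq :=
      hc3.sub ((fBP_continuous θ).continuousOn.mul hgc)
    have hF : ContinuousOn (fun u => D1 g θ u ^ 2 + D2 g θ u ^ 2 + D3 g θ u ^ 2) unitSq :=
      ((hD1.pow 2).add (hD2.pow 2)).add (hD3.pow 2)
    have hae : ∀ᵐ u ∂(volume.restrict unitSq),
        (D1 g θ u ^ 2 + D2 g θ u ^ 2 + D3 g θ u ^ 2) * w u = 0 := by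
      refine (setIntegral_eq_zero_iff_of_nonneg_ae ?_
        (hwint.continuousOn_mul hF isCompact_unitSq)).1 h0
      filter_upwards [hwpos] with u hu
      have := hu.le
      simp only [Pi.zero_apply]
      positivity
    have hF0 : EqOn (fun u => D1 g θ u ^ 2 + D2 g θ u ^ 2 + D3 g θ u ^ 2) (fun _ => 0)
        unitSq := by
      refine Measure.eqOn_of_ae_eq (μ := volume) ?_ hF continuousOn_const
        unitSq_subset_closure_interior
      filter_upwards [hae, hwpos] with u hu hpos
      exact (mul_eq_zero.1 hu).resolve_right hpos.ne'
    have hz : ∀ u ∈ unitSq, D1 g θ u = 0 ∧ D2 g θ u = 0 ∧ D3 g θ u = 0 := by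
      intro u hu
      have h : D1 g θ u ^ 2 + D2 g θ u ^ 2 + D3 g θ u ^ 2 = 0 := hF0 hu
      refine ⟨?_, ?_, ?_⟩ <;> rw [← sq_eq_zero_iff] <;>
        linarith [sq_nonneg (D1 g θ u), sq_nonneg (D2 g θ u), sq_nonneg (D3 g θ u)]
    have e1 : ∀ t ∈ Icc (0 : ℝ) 1, deriv (fun v => g v 1) t = θ.1 * g t 1 := fun t ht =>
      sub_eq_zero.1 (hz (t, 1) ⟨ht, hone⟩).1
    have e2 : ∀ t ∈ Icc (0 : ℝ) 1, deriv (fun v => g 1 v) t = θ.2.1 * g 1 t := fun t ht =>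
      sub_eq_zero.1 (hz (1, t) ⟨hone, ht⟩).2.1
    have b1 : ∀ t ∈ Icc (0 : ℝ) 1, g t 1 = bpPgf θ t 1 := by
      intro t ht
      rw [eq_exp_of_deriv (φ := fun v => g v 1) hd1 hg11 e1 ht]
      simp [bpPgf]
    have b2 : ∀ t ∈ Icc (0 : ℝ) 1, g 1 t = bpPgf θ 1 t := by
      intro t ht
      rw [eq_exp_of_deriv (φ := fun v => g 1 v) hd2 hg11 e2 ht]
      simp [bpPgf]
    have key := goursat_unique (H := fun a b => g a b - bpPgf θ a b)
      (H₁ := fun a b => deriv (fun t => g t b) a - (θ.1 + θ.2.2 * (b - 1)) * bpPgf θ a b)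
      (f := fBP θ) (hgc.sub (bpPgf_continuous θ).continuousOn) (fBP_continuous θ).continuousOn
      (fun u hu => (hd3a u hu).hasDerivAt.sub (bpPgf_hasDerivAt_fst θ u.1 u.2))
      (fun u hu => by
        refine ((hd3b u hu).hasDerivAt.sub (bpPgf_hasDerivAt_mixed θ u.1 u.2)).congr_deriv ?_
        have e3 : deriv (fun v₂ => deriv (fun v₁ => g v₁ v₂) u.1) u.2
          = fBP θ u * g u.1 u.2 := sub_eq_zero.1 (hz u hu).2.2
        rw [e3]
        ring)
      (fun v hv => sub_eq_zero.2 (b2 v hv))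
      (fun u hu => by
        rw [e1 u hu, b1 u hu]
        ring)
    exact fun u hu => sub_eq_zero.1 (key u hu)
  · intro h
    have hpart : ∀ u ∈ unitSq, deriv (fun t => g t u.2) u.1
        = (θ.1 + θ.2.2 * (u.2 - 1)) * bpPgf θ u.1 u.2 := by
      intro u hu
      rw [← deriv_bpPgf_fst]
      exact deriv_eq_of_eqOn hu.1 (hd3a u hu) (bpPgf_hasDerivAt_fst θ u.1 u.2).differentiableAt
        (fun t ht => h (t, u.2) ⟨ht, hu.2⟩)
    refine setIntegral_eq_zero_of_forall_eq_zero fun u hu => ?_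
    have z1 : D1 g θ u = 0 := by
      have a := hpart (u.1, 1) ⟨hu.1, hone⟩
      have b := h (u.1, 1) ⟨hu.1, hone⟩
      simp only at a b
      rw [D1, a, b]
      ring
    have z2 : D2 g θ u = 0 := by
      have a : deriv (fun t => g 1 t) u.2 = deriv (fun t => bpPgf θ 1 t) u.2 :=
        deriv_eq_of_eqOn hu.2 (hd2 _ hu.2) (bpPgf_hasDerivAt_snd θ 1 u.2).differentiableAt
          (fun t ht => h (1, t) ⟨hone, ht⟩)
      have b := h (1, u.2) ⟨hone, hu.2⟩
      simp only at b
      rw [D2, a, b, (bpPgf_hasDerivAt_snd θ 1 u.2).deriv]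
      ring
    have z3 : D3 g θ u = 0 := by
      have a := deriv_eq_of_eqOn hu.2 (hd3b u hu)
        (bpPgf_hasDerivAt_mixed θ u.1 u.2).differentiableAt
        (fun t ht => hpart (u.1, t) ⟨hu.1, ht⟩)
      rw [D3, a, (bpPgf_hasDerivAt_mixed θ u.1 u.2).deriv, h u hu]
      ring
    rw [z1, z2, z3]
    simp
end

section
/- Let X₁=(X_{11},X_{12}),…,Xₙ=(X_{n1},X_{n2}) be points of ℕ₀², ϑ=(ϑ₁,ϑ₂,ϑ₃)∈ℝ³, and a₁,a₂>−1. Then, with the convention that a summand whose numerator vanishes is 0, n∫₀¹∫₀¹ D₁ₙ(u;ϑ)² u₁^{a₁}u₂^{a₂} du₁du₂ = (1/(n(a₂+1))) Σ_{i=1}^n Σ_{j=1}^n [ X_{i1}X_{j1}1{X_{i1}≥1}1{X_{j1}≥1}/(X_{i1}+X_{j1}+a₁−1) − ϑ₁(X_{i1}1{X_{i1}≥1}+X_{j1}1{X_{j1}≥1})/(X_{i1}+X_{j1}+a₁) + ϑ₁²/(X_{i1}+X_{j1}+a₁+1) ], and symmetrically n∫₀¹∫₀¹ D₂ₙ(u;ϑ)²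 u₁^{a₁}u₂^{a₂} du₁du₂ = (1/(n(a₁+1))) Σ_{i=1}^n Σ_{j=1}^n [ X_{i2}X_{j2}1{X_{i2}≥1}1{X_{j2}≥1}/(X_{i2}+X_{j2}+a₂−1) − ϑ₂(X_{i2}1{X_{i2}≥1}+X_{j2}1{X_{j2}≥1})/(X_{i2}+X_{j2}+a₂) + ϑ₂²/(X_{i2}+X_{j2}+a₂+1) ]. -/
/-!
With one argument of the empirical pgf set to `1`, `D₁ₙ` depends on `u₁` only and `D₂ₙ` on `u₂`
only, so the integral over the unit square factors as a one-dimensional integral of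
`(n⁻¹ ∑ᵢ (kᵢ x^(kᵢ-1) - t x^kᵢ))² x^a` times `∫₀¹ x^b = 1/(b+1)`. For `x > 0` the square expands
into a double sum of real powers `c x^r`. Every one of them has `c = 0` or `r > -1`, so it is
integrable on `[0,1]` with integral `c/(r+1)` (`integral_const_mul_rpow`), and the sum can be
integrated term by term (`integral_sq_mul_rpow`).
-/


open MeasureTheory ProbabilityTheory Real Set Filter

/-- The case `c = 0` covers exponents `r ≤ -1`, where `x ^ r` itself is not integrable; there the
value `c / (r + 1)` is `0` even if `r = -1`. -/
lemma integral_const_mul_rpow (c r : ℝ) (h : c = 0 ∨ -1 < r) :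
    IntervalIntegrable (fun x : ℝ => c * x ^ r) volume 0 1 ∧
      ∫ x in (0:ℝ)..1, c * x ^ r = c / (r + 1) := by
  rcases h with rfl | h
  · simp
  · refine ⟨(intervalIntegral.intervalIntegrable_rpow' h).const_mul c, ?_⟩
    have h0 : r + 1 ≠ 0 := by linarith
    rw [intervalIntegral.integral_const_mul, integral_rpow (Or.inl h), Real.one_rpow,
      Real.zero_rpow h0]
    ring

lemma natCast_mul_pow_pred (k : ℕ) {x : ℝ} (hx : 0 < x) :
    (k : ℝ) * x ^ (k - 1) = k * (x ^ k * x⁻¹) := by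
  rcases k with _ | k
  · simp
  · rw [Nat.add_sub_cancel, pow_succ, mul_assoc, mul_inv_cancel₀ hx.ne', mul_one]

/-- The `(i, j)` summand of the expanded square, with `k = kᵢ` and `l = kⱼ`. -/
lemma mul_mul_rpow_expand (k l : ℕ) (t a : ℝ) {x : ℝ} (hx : 0 < x) :
    ((k : ℝ) * x ^ (k - 1) - t * x ^ k) * ((l : ℝ) * x ^ (l - 1) - t * x ^ l) * x ^ a =
      ((k : ℝ) * l) * x ^ ((k : ℝ) + l + a - 1 - 1)
        - (t * ((k : ℝ) + l)) * x ^ ((k : ℝ) + l + a - 1)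
        + t ^ 2 * x ^ ((k : ℝ) + l + a) := by
  rw [natCast_mul_pow_pred k hx, natCast_mul_pow_pred l hx, Real.rpow_sub_one hx.ne',
    Real.rpow_sub_one hx.ne', Real.rpow_add hx, Real.rpow_add hx, Real.rpow_natCast,
    Real.rpow_natCast]
  field_simp
  ring

lemma integral_term (k l : ℕ) (t a : ℝ) (ha : -1 < a) :
    IntervalIntegrable (fun x : ℝ => ((k : ℝ) * l) * x ^ ((k : ℝ) + l + a - 1 - 1)
        - (t * ((k : ℝ) + l)) * x ^ ((k : ℝ) + l + a - 1)
        + t ^ 2 * x ^ ((k : ℝ) + l + a)) volume 0 1 ∧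
      ∫ x in (0:ℝ)..1, (((k : ℝ) * l) * x ^ ((k : ℝ) + l + a - 1 - 1)
        - (t * ((k : ℝ) + l)) * x ^ ((k : ℝ) + l + a - 1)
        + t ^ 2 * x ^ ((k : ℝ) + l + a)) =
      ((k : ℝ) * l) / ((k : ℝ) + l + a - 1) - t * ((k : ℝ) + l) / ((k : ℝ) + l + a)
        + t ^ 2 / ((k : ℝ) + l + a + 1) := by
  have hk : (0:ℝ) ≤ k := k.cast_nonneg
  have hl : (0:ℝ) ≤ l := l.cast_nonneg
  obtain ⟨i1, e1⟩ := integral_const_mul_rpow ((k : ℝ) * l) ((k : ℝ) + l + a - 1 - 1) (by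
    rcases Nat.eq_zero_or_pos k with rfl | hk'
    · simp
    rcases Nat.eq_zero_or_pos l with rfl | hl'
    · simp
    have h1 : (1:ℝ) ≤ k := by exact_mod_cast hk'
    have h2 : (1:ℝ) ≤ l := by exact_mod_cast hl'
    right; linarith)
  obtain ⟨i2, e2⟩ := integral_const_mul_rpow (t * ((k : ℝ) + l)) ((k : ℝ) + l + a - 1) (by
    rcases Nat.eq_zero_or_pos (k + l) with h | h
    · left
      have : (k : ℝ) + l = 0 := by exact_mod_cast h
      rw [this, mul_zero]
    · right
      have : (1:ℝ) ≤ (k : ℝ) + l := by exact_mod_cast h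
      linarith)
  obtain ⟨i3, e3⟩ := integral_const_mul_rpow (t ^ 2) ((k : ℝ) + l + a) (by right; linarith)
  refine ⟨(i1.sub i2).add i3, ?_⟩
  rw [intervalIntegral.integral_add (i1.sub i2) i3, intervalIntegral.integral_sub i1 i2,
    e1, e2, e3, sub_add_cancel, sub_add_cancel]

lemma integral_sq_mul_rpow (n : ℕ) (k : ℕ → ℕ) (t a : ℝ) (ha : -1 < a) :
    ∫ x in Icc (0:ℝ) 1,
      ((n : ℝ)⁻¹ * ∑ i ∈ Finset.range n, ((k i : ℝ) * x ^ (k i - 1) - t * x ^ k i)) ^ 2 * x ^ a =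
    ((n : ℝ)⁻¹) ^ 2 * ∑ i ∈ Finset.range n, ∑ j ∈ Finset.range n,
      (((k i : ℝ) * k j) / ((k i : ℝ) + k j + a - 1)
        - t * ((k i : ℝ) + k j) / ((k i : ℝ) + k j + a)
        + t ^ 2 / ((k i : ℝ) + k j + a + 1)) := by
  -- Dropping the endpoint `0` makes every base positive, so that exponents can be added.
  rw [integral_Icc_eq_integral_Ioc]
  rw [setIntegral_congr_fun (g := fun x : ℝ => ((n : ℝ)⁻¹) ^ 2 *
      ∑ i ∈ Finset.range n, ∑ j ∈ Finset.range n,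
        (((k i : ℝ) * k j) * x ^ ((k i : ℝ) + k j + a - 1 - 1)
        - (t * ((k i : ℝ) + k j)) * x ^ ((k i : ℝ) + k j + a - 1)
        + t ^ 2 * x ^ ((k i : ℝ) + k j + a))) measurableSet_Ioc ?_]
  · rw [← intervalIntegral.integral_of_le zero_le_one, intervalIntegral.integral_const_mul]
    congr 1
    rw [intervalIntegral.integral_finsetSum]
    · refine Finset.sum_congr rfl fun i _ => ?_
      rw [intervalIntegral.integral_finsetSum]
      · exact Finset.sum_congr rfl fun j _ => (integral_term (k i) (k j) t a ha).2
      · exact fun j _ => (integral_term (k i) (k j) t a ha).1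
    · intro i _
      have := IntervalIntegrable.sum (Finset.range n)
        (fun j _ => (integral_term (k i) (k j) t a ha).1)
      simpa only [Finset.sum_fn] using this
  · intro x hx
    simp only [← mul_mul_rpow_expand _ _ t a hx.1]
    rw [mul_pow, sq (∑ i ∈ Finset.range n, _), Finset.sum_mul_sum, mul_assoc, Finset.sum_mul]
    simp only [Finset.sum_mul]

lemma integral_Icc_rpow (b : ℝ) (hb : -1 < b) : ∫ x in Icc (0:ℝ) 1, x ^ b = (b + 1)⁻¹ := by
  rw [integral_Icc_eq_integral_Ioc, ← intervalIntegral.integral_of_le zero_le_one]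
  simpa using (integral_const_mul_rpow 1 b (Or.inr hb)).2

lemma deriv_mean_pow_sub (n : ℕ) (k : ℕ → ℕ) (t x : ℝ) :
    deriv (fun v : ℝ => (n : ℝ)⁻¹ * ∑ i ∈ Finset.range n, v ^ k i) x
      - t * ((n : ℝ)⁻¹ * ∑ i ∈ Finset.range n, x ^ k i) =
    (n : ℝ)⁻¹ * ∑ i ∈ Finset.range n, ((k i : ℝ) * x ^ (k i - 1) - t * x ^ k i) := by
  have h : HasDerivAt (fun v : ℝ => (n : ℝ)⁻¹ * ∑ i ∈ Finset.range n, v ^ k i)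
      ((n : ℝ)⁻¹ * ∑ i ∈ Finset.range n, (k i : ℝ) * x ^ (k i - 1)) x :=
    (HasDerivAt.fun_sum fun i _ => hasDerivAt_pow (k i) x).const_mul _
  rw [h.deriv, Finset.sum_sub_distrib, ← Finset.mul_sum]
  ring

lemma ite_one_le_natCast (k : ℕ) : (if 1 ≤ k then (k : ℝ) else 0) = k := by
  rcases k with _ | k <;> simp

lemma ite_one_le_natCast_mul (k l : ℕ) :
    (if 1 ≤ k ∧ 1 ≤ l then (k : ℝ) * l else 0) = k * l := by
  rcases k with _ | k <;> rcases l with _ | l <;> simp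

/-- Section 6.1: closed-form expressions for the first two components of
the test statistic with weight `w(u) = u₁^{a₁} u₂^{a₂}`.  Lean's convention `x / 0 = 0`
implements the convention that a summand whose numerator vanishes is `0`. -/
theorem Tnw_first_two_components_closed_form
    {Ω : Type*} (X : ℕ → Ω → ℕ × ℕ) (ω : Ω) (n : ℕ) (hn : 0 < n)
    (ϑ : ℝ × ℝ × ℝ) (a₁ a₂ : ℝ) (ha₁ : -1 < a₁) (ha₂ : -1 < a₂) :
    (n * ∫ u in unitSq, D1 (epgf X n ω) ϑ u ^ 2 * (u.1 ^ a₁ * u.2 ^ a₂) =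
      ((n : ℝ) * (a₂ + 1))⁻¹ * ∑ i ∈ Finset.range n, ∑ j ∈ Finset.range n,
        ((if 1 ≤ (X i ω).1 ∧ 1 ≤ (X j ω).1
            then ((X i ω).1 : ℝ) * ((X j ω).1 : ℝ) else 0) /
              (((X i ω).1 : ℝ) + ((X j ω).1 : ℝ) + a₁ - 1)
          - ϑ.1 * ((if 1 ≤ (X i ω).1 then ((X i ω).1 : ℝ) else 0) +
              (if 1 ≤ (X j ω).1 then ((X j ω).1 : ℝ) else 0)) /
              (((X i ω).1 : ℝ) + ((X j ω).1 : ℝ) + a₁)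
          + ϑ.1 ^ 2 / (((X i ω).1 : ℝ) + ((X j ω).1 : ℝ) + a₁ + 1))) ∧
    (n * ∫ u in unitSq, D2 (epgf X n ω) ϑ u ^ 2 * (u.1 ^ a₁ * u.2 ^ a₂) =
      ((n : ℝ) * (a₁ + 1))⁻¹ * ∑ i ∈ Finset.range n, ∑ j ∈ Finset.range n,
        ((if 1 ≤ (X i ω).2 ∧ 1 ≤ (X j ω).2
            then ((X i ω).2 : ℝ) * ((X j ω).2 : ℝ) else 0) /
              (((X i ω).2 : ℝ) + ((X j ω).2 : ℝ) + a₂ - 1)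
          - ϑ.2.1 * ((if 1 ≤ (X i ω).2 then ((X i ω).2 : ℝ) else 0) +
              (if 1 ≤ (X j ω).2 then ((X j ω).2 : ℝ) else 0)) /
              (((X i ω).2 : ℝ) + ((X j ω).2 : ℝ) + a₂)
          + ϑ.2.1 ^ 2 / (((X i ω).2 : ℝ) + ((X j ω).2 : ℝ) + a₂ + 1))) := by
  have hn' : (n : ℝ) ≠ 0 := by exact_mod_cast hn.ne'
  have hc : ∀ S b : ℝ, n * ((n : ℝ)⁻¹ ^ 2 * S * (b + 1)⁻¹) = ((n : ℝ) * (b + 1))⁻¹ * S := by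
    intro S b
    rw [mul_inv]
    field_simp
  simp only [ite_one_le_natCast, ite_one_le_natCast_mul]
  constructor
  · have hD : ∀ u : ℝ × ℝ, D1 (epgf X n ω) ϑ u ^ 2 * (u.1 ^ a₁ * u.2 ^ a₂) =
        (((n : ℝ)⁻¹ * ∑ i ∈ Finset.range n, (((X i ω).1 : ℝ) * u.1 ^ ((X i ω).1 - 1)
          - ϑ.1 * u.1 ^ (X i ω).1)) ^ 2 * u.1 ^ a₁) * u.2 ^ a₂ := by
      intro u
      rw [← deriv_mean_pow_sub n (fun i => (X i ω).1)]
      simp only [D1, epgf, one_pow, mul_one]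
      ring
    simp only [hD]
    rw [unitSq, Measure.volume_eq_prod, setIntegral_prod_mul
      (fun x : ℝ => ((n : ℝ)⁻¹ * ∑ i ∈ Finset.range n, (((X i ω).1 : ℝ) * x ^ ((X i ω).1 - 1)
          - ϑ.1 * x ^ (X i ω).1)) ^ 2 * x ^ a₁) (fun y : ℝ => y ^ a₂),
      integral_sq_mul_rpow n (fun i => (X i ω).1) ϑ.1 a₁ ha₁, integral_Icc_rpow a₂ ha₂]
    exact hc _ _
  · have hD : ∀ u : ℝ × ℝ, D2 (epgf X n ω) ϑ u ^ 2 * (u.1 ^ a₁ * u.2 ^ a₂) =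
        u.1 ^ a₁ * (((n : ℝ)⁻¹ * ∑ i ∈ Finset.range n, (((X i ω).2 : ℝ) * u.2 ^ ((X i ω).2 - 1)
          - ϑ.2.1 * u.2 ^ (X i ω).2)) ^ 2 * u.2 ^ a₂) := by
      intro u
      rw [← deriv_mean_pow_sub n (fun i => (X i ω).2)]
      simp only [D2, epgf, one_pow, one_mul]
      ring
    simp only [hD]
    rw [unitSq, Measure.volume_eq_prod, setIntegral_prod_mul (fun x : ℝ => x ^ a₁)
      (fun y : ℝ => ((n : ℝ)⁻¹ * ∑ i ∈ Finset.range n, (((X i ω).2 : ℝ) * y ^ ((X i ω).2 - 1)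
          - ϑ.2.1 * y ^ (X i ω).2)) ^ 2 * y ^ a₂),
      integral_sq_mul_rpow n (fun i => (X i ω).2) ϑ.2.1 a₂ ha₂, integral_Icc_rpow a₁ ha₁]
    rw [mul_comm (a₁ + 1)⁻¹]
    exact hc _ _
end
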